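/- Assume (H1)–(H4). If ∫_{t₀}^∞ r₁(v)^{-1/α} ( ∫_{t₀}^v r₂(u)^{-1/β} ( ∫_{t₀}^u π(σ(s))^γ·q(s) ds )^{1/β} du )^{1/α} dv = ∞, then equation (E) has property A, i.e. every solution of (E) is either oscillatory or tends to 0 as t → ∞. -/

import Mathlib

open Filter MeasureTheory Set

/-- Signed power: for exponents that are quotients of odd positive integers,
`x ^ p` preserves the sign of `x`. -/
noncomputable def opow (x p : ℝ) : ℝ := Real.sign x * |x| ^ p

/-- `L₁y = r₁ · (y')^α`. -/
noncomputable def L1 (r₁ : ℝ → ℝ) (α : ℝ) (y : ℝ → ℝ) : ℝ → ℝ :=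
  fun t => r₁ t * opow (deriv y t) α

/-- `L₂y = r₂ · ((L₁y)')^β`. -/
noncomputable def L2 (r₁ r₂ : ℝ → ℝ) (α β : ℝ) (y : ℝ → ℝ) : ℝ → ℝ :=
  fun t => r₂ t * opow (deriv (L1 r₁ α y) t) β

/-- `L₃y = (L₂y)'`. -/
noncomputable def L3 (r₁ r₂ : ℝ → ℝ) (α β : ℝ) (y : ℝ → ℝ) : ℝ → ℝ :=
  deriv (L2 r₁ r₂ α β y)

/-- A real number which is a quotient of odd positive integers. -/
def OddQuotient (x : ℝ) : Prop :=
  ∃ m n : ℕ, Odd m ∧ Odd n ∧ 0 < m ∧ 0 < n ∧ x = (m : ℝ) / (n : ℝ)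

/-- The standing hypotheses (H1)–(H4). -/
structure Hyp (t₀ α β γ : ℝ) (r₁ r₂ q σ : ℝ → ℝ) : Prop where
  ht₀ : 0 < t₀
  hα : OddQuotient α
  hβ : OddQuotient β
  hγ : OddQuotient γ
  hr₁c : ContinuousOn r₁ (Set.Ici t₀)
  hr₂c : ContinuousOn r₂ (Set.Ici t₀)
  hr₁p : ∀ t, t₀ ≤ t → 0 < r₁ t
  hr₂p : ∀ t, t₀ ≤ t → 0 < r₂ t
  /-- noncanonical: `π₁(t₀) = ∫_{t₀}^∞ r₁^{-1/α} < ∞` -/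
  hπ₁fin : IntegrableOn (fun s => r₁ s ^ (-(1/α))) (Set.Ici t₀)
  /-- noncanonical: `π₂(t₀) = ∫_{t₀}^∞ r₂^{-1/β} < ∞` -/
  hπ₂fin : IntegrableOn (fun s => r₂ s ^ (-(1/β))) (Set.Ici t₀)
  hqc : ContinuousOn q (Set.Ici t₀)
  hq0 : ∀ t, t₀ ≤ t → 0 ≤ q t
  /-- `q` does not vanish eventually -/
  hqnv : ∀ T, t₀ ≤ T → ∃ t, T ≤ t ∧ q t ≠ 0
  hσd : DifferentiableOn ℝ σ (Set.Ici t₀)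
  hσd' : ContinuousOn (deriv σ) (Set.Ici t₀)
  hσpos : ∀ t, t₀ ≤ t → 0 < σ t
  hσadv : ∀ t, t₀ ≤ t → t ≤ σ t
  hσmono : ∀ t, t₀ ≤ t → 0 ≤ deriv σ t

/-- `y` is a (nontrivial) solution of equation (E) on some half-line `[T,∞) ⊆ [t₀,∞)`. -/
def IsSolution (t₀ α β γ : ℝ) (r₁ r₂ q σ y : ℝ → ℝ) : Prop :=
  ∃ T, t₀ ≤ T ∧
    ContinuousOn y (Set.Ici T) ∧
    DifferentiableOn ℝ y (Set.Ici T) ∧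
    ContinuousOn (L1 r₁ α y) (Set.Ici T) ∧
    DifferentiableOn ℝ (L1 r₁ α y) (Set.Ici T) ∧
    ContinuousOn (L2 r₁ r₂ α β y) (Set.Ici T) ∧
    DifferentiableOn ℝ (L2 r₁ r₂ α β y) (Set.Ici T) ∧
    (∀ t, T ≤ t → L3 r₁ r₂ α β y t + q t * opow (y (σ t)) γ = 0) ∧
    (∀ T', T ≤ T' → ∃ t, T' ≤ t ∧ y t ≠ 0)

/-- A function is oscillatory if it has arbitrarily large zeros. -/
def Oscillatory (y : ℝ → ℝ) : Prop := ∀ T : ℝ, ∃ t, T ≤ t ∧ y t = 0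

/-- Equation (E) has property A: every solution is oscillatory or tends to `0`. -/
def PropertyA (t₀ α β γ : ℝ) (r₁ r₂ q σ : ℝ → ℝ) : Prop :=
  ∀ y : ℝ → ℝ, IsSolution t₀ α β γ r₁ r₂ q σ y →
    Oscillatory y ∨ Filter.Tendsto y Filter.atTop (nhds 0)

/-- Equation (E) is oscillatory: every solution is oscillatory. -/
def OscillatoryEq (t₀ α β γ : ℝ) (r₁ r₂ q σ : ℝ → ℝ) : Prop :=
  ∀ y : ℝ → ℝ, IsSolution t₀ α β γ r₁ r₂ q σ y → Oscillatory y

/-- `π₁(t) = ∫_t^∞ r₁(s)^{-1/α} ds`. -/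
noncomputable def pi1 (r₁ : ℝ → ℝ) (α : ℝ) (t : ℝ) : ℝ :=
  ∫ s in Set.Ioi t, r₁ s ^ (-(1/α))

/-- `π₂(t) = ∫_t^∞ r₂(s)^{-1/β} ds`. -/
noncomputable def pi2 (r₂ : ℝ → ℝ) (β : ℝ) (t : ℝ) : ℝ :=
  ∫ s in Set.Ioi t, r₂ s ^ (-(1/β))

/-- `π(t) = ∫_t^∞ r₁(s)^{-1/α} · π₂(s)^{1/α} ds`. -/
noncomputable def piInf (r₁ r₂ : ℝ → ℝ) (α β : ℝ) (t : ℝ) : ℝ :=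
  ∫ s in Set.Ioi t, r₁ s ^ (-(1/α)) * (pi2 r₂ β s) ^ (1/α)

/-- The class `S₁`: `y > 0, L₁y < 0, L₂y < 0, L₃y < 0` on `[t₁,∞)`. -/
def InS1 (r₁ r₂ : ℝ → ℝ) (α β : ℝ) (y : ℝ → ℝ) (t₁ : ℝ) : Prop :=
  ∀ t, t₁ ≤ t → 0 < y t ∧ L1 r₁ α y t < 0 ∧ L2 r₁ r₂ α β y t < 0 ∧ L3 r₁ r₂ α β y t < 0

/-- The class `S₂`: `y > 0, L₁y < 0, L₂y > 0, L₃y < 0` on `[t₁,∞)`. -/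
def InS2 (r₁ r₂ : ℝ → ℝ) (α β : ℝ) (y : ℝ → ℝ) (t₁ : ℝ) : Prop :=
  ∀ t, t₁ ≤ t → 0 < y t ∧ L1 r₁ α y t < 0 ∧ 0 < L2 r₁ r₂ α β y t ∧ L3 r₁ r₂ α β y t < 0

/-- The class `S₃`: `y > 0, L₁y > 0, L₂y > 0, L₃y < 0` on `[t₁,∞)`. -/
def InS3 (r₁ r₂ : ℝ → ℝ) (α β : ℝ) (y : ℝ → ℝ) (t₁ : ℝ) : Prop :=
  ∀ t, t₁ ≤ t → 0 < y t ∧ 0 < L1 r₁ α y t ∧ 0 < L2 r₁ r₂ α β y t ∧ L3 r₁ r₂ α β y t < 0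

/-- The class `S₄`: `y > 0, L₁y > 0, L₂y < 0, L₃y < 0` on `[t₁,∞)`. -/
def InS4 (r₁ r₂ : ℝ → ℝ) (α β : ℝ) (y : ℝ → ℝ) (t₁ : ℝ) : Prop :=
  ∀ t, t₁ ≤ t → 0 < y t ∧ 0 < L1 r₁ α y t ∧ L2 r₁ r₂ α β y t < 0 ∧ L3 r₁ r₂ α β y t < 0

/-!
A solution that is positive near infinity has `L₃y ≤ 0` there, so `L₂y`, then `L₁y`, then `y` is
eventually monotone; hence either `y → 0` or `y ≥ l > 0` eventually. In the second case the
equation gives `L₃y ≤ -c π(σ)^γ q`. Noncanonicity makes the divergence of the triple integral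
propagate inwards: all three nested integrals tend to infinity. Each integration of the inequality
therefore loses only a constant factor, because its integration constant is absorbed by a divergent
comparison function, and after three integrations `y` is at most a negative multiple of the triple
integral, contradicting `y > 0`.
-/

lemma opow_neg (x p : ℝ) : opow (-x) p = -opow x p := by
  simp [opow, Real.sign_neg]

lemma opow_of_pos {x : ℝ} (hx : 0 < x) (p : ℝ) : opow x p = x ^ p := by
  simp [opow, Real.sign_of_pos hx, abs_of_pos hx]

lemma opow_nonneg_iff {x p : ℝ} : 0 ≤ opow x p ↔ 0 ≤ x := by
  rcases lt_trichotomy x 0 with hx | rfl | hx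
  · have : opow x p < 0 := by
      rw [← neg_neg x, opow_neg, opow_of_pos (neg_pos.2 hx)]
      exact neg_neg_of_pos (Real.rpow_pos_of_pos (neg_pos.2 hx) p)
    exact iff_of_false this.not_ge hx.not_ge
  · simp [opow]
  · exact iff_of_true ((opow_of_pos hx p).symm ▸ Real.rpow_nonneg hx.le p) hx.le

lemma opow_nonpos_iff {x p : ℝ} : opow x p ≤ 0 ↔ x ≤ 0 := by
  simpa [opow_neg] using opow_nonneg_iff (x := -x) (p := p)

lemma le_neg_rpow_of_opow_le_neg {x p k : ℝ} (hp : 0 < p) (hk : 0 ≤ k) (h : opow x p ≤ -k) :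
    x ≤ -k ^ (1 / p) := by
  obtain rfl | hx := (opow_nonpos_iff.1 (h.trans (neg_nonpos.2 hk))).eq_or_lt
  · obtain rfl : k = 0 := le_antisymm (by simpa [opow] using h) hk
    simp [Real.zero_rpow (inv_ne_zero hp.ne')]
  · have hkx : k ≤ (-x) ^ p := by
      rw [← opow_of_pos (neg_pos.2 hx), opow_neg]
      exact le_neg_of_le_neg h
    rw [one_div]
    exact le_neg_of_le_neg ((Real.rpow_inv_le_iff_of_pos hk (neg_pos.2 hx).le hp).2 hkx)

lemma OddQuotient.pos {x : ℝ} (h : OddQuotient x) : 0 < x := by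
  obtain ⟨m, n, -, -, hm, hn, rfl⟩ := h
  positivity

/-! ### Functions of eventually constant sign -/

/-- `f` is of one weak sign near infinity: the sign information passed from a quasi-derivative
to the one below it. -/
def EventuallySigned (f : ℝ → ℝ) : Prop :=
  (∀ᶠ t in atTop, 0 ≤ f t) ∨ ∀ᶠ t in atTop, f t ≤ 0

lemma EventuallySigned.neg {f : ℝ → ℝ} (h : EventuallySigned f) : EventuallySigned (-f) := by
  simpa [EventuallySigned, or_comm] using h

lemma eventuallySigned_of_monotoneOn_Ici {f : ℝ → ℝ} {a : ℝ} (hf : MonotoneOn f (Ici a)) :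
    EventuallySigned f := by
  by_cases h : ∃ b, a ≤ b ∧ 0 ≤ f b
  · obtain ⟨b, hab, hb⟩ := h
    left
    filter_upwards [eventually_ge_atTop b] with t ht
    exact hb.trans (hf hab (hab.trans ht) ht)
  · push Not at h
    right
    filter_upwards [eventually_ge_atTop a] with t ht
    exact (h t ht).le

lemma exists_monotoneOn_Ici_of_deriv_nonneg {f : ℝ → ℝ}
    (hf : ∀ᶠ t in atTop, DifferentiableAt ℝ f t) (hf' : ∀ᶠ t in atTop, 0 ≤ deriv f t) :
    ∃ a, MonotoneOn f (Ici a) := by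
  obtain ⟨a, ha⟩ := (hf.and hf').exists_forall_of_atTop
  refine ⟨a, monotoneOn_of_deriv_nonneg (convex_Ici a) ?_ ?_ ?_⟩
  · exact fun t ht => (ha t ht).1.continuousAt.continuousWithinAt
  · exact fun t ht => (ha t (interior_subset ht)).1.differentiableWithinAt
  · exact fun t ht => (ha t (interior_subset ht)).2

lemma EventuallySigned.of_deriv {f : ℝ → ℝ} (hf : ∀ᶠ t in atTop, DifferentiableAt ℝ f t)
    (h : EventuallySigned (deriv f)) : EventuallySigned f := by
  rcases h with h | h
  · obtain ⟨a, ha⟩ := exists_monotoneOn_Ici_of_deriv_nonneg hf h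
    exact eventuallySigned_of_monotoneOn_Ici ha
  · obtain ⟨a, ha⟩ := exists_monotoneOn_Ici_of_deriv_nonneg (f := -f)
      (hf.mono fun t ht => ht.neg) (h.mono fun t ht => by simpa [deriv.neg] using ht)
    simpa using (eventuallySigned_of_monotoneOn_Ici ha).neg

lemma EventuallySigned.deriv_of_L1 {r y : ℝ → ℝ} {p : ℝ} (hr : ∀ᶠ t in atTop, 0 < r t)
    (h : EventuallySigned (L1 r p y)) : EventuallySigned (deriv y) := by
  refine h.imp (fun h => ?_) (fun h => ?_)
  · filter_upwards [hr, h] with t hrt ht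
    exact opow_nonneg_iff.1 (nonneg_of_mul_nonneg_right ht hrt)
  · filter_upwards [hr, h] with t hrt ht
    exact opow_nonpos_iff.1 (nonpos_of_mul_nonpos_right ht hrt)

lemma tendsto_zero_or_eventually_ge_of_deriv_eventuallySigned {y : ℝ → ℝ}
    (hy : ∀ᶠ t in atTop, DifferentiableAt ℝ y t) (hpos : ∀ᶠ t in atTop, 0 < y t)
    (h : EventuallySigned (deriv y)) :
    Tendsto y atTop (nhds 0) ∨ ∃ l > 0, ∀ᶠ t in atTop, l ≤ y t := by
  have dichotomy (l : ℝ) : (∀ᶠ t in atTop, l ≤ y t) ∨ ∀ᶠ t in atTop, y t ≤ l := by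
    have h_sub : EventuallySigned fun t => y t - l :=
      .of_deriv (hy.mono fun t ht => ht.sub_const l) (by simpa [funext deriv_sub_const] using h)
    simpa [EventuallySigned] using h_sub
  refine or_iff_not_imp_right.2 fun hbelow => Metric.tendsto_nhds.2 fun ε hε => ?_
  have hle : ∀ᶠ t in atTop, y t ≤ ε / 2 :=
    (dichotomy (ε / 2)).resolve_left fun hge => hbelow ⟨_, half_pos hε, hge⟩
  filter_upwards [hpos, hle] with t ht0 htε
  rw [Real.dist_eq, sub_zero, abs_of_pos ht0]
  linarith

/-! ### Primitives and tail integrals -/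

lemma continuousOn_Ici_intervalIntegral {f : ℝ → ℝ} {a : ℝ}
    (hf : ∀ b, a ≤ b → IntervalIntegrable f volume a b) :
    ContinuousOn (fun t => ∫ s in a..t, f s) (Ici a) := by
  refine continuousOn_of_locally_continuousOn fun t ht =>
    ⟨Iio (t + 1), isOpen_Iio, lt_add_one t, ?_⟩
  have hat : a ≤ t + 1 := (mem_Ici.1 ht).trans (lt_add_one t).le
  refine (intervalIntegral.continuousOn_primitive_interval' (hf _ hat) left_mem_uIcc).mono ?_
  rw [uIcc_of_le hat]
  exact fun s hs => ⟨hs.1, le_of_lt hs.2⟩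

lemma hasDerivAt_intervalIntegral_of_continuousOn_Ici {f : ℝ → ℝ} {a t : ℝ}
    (hf : ContinuousOn f (Ici a)) (ht : a < t) :
    HasDerivAt (fun t => ∫ s in a..t, f s) (f t) t := by
  refine intervalIntegral.integral_hasDerivAt_right
    (hf.mono (by rw [uIcc_of_le ht.le]; exact Icc_subset_Ici_self)).intervalIntegrable ?_
    (hf.continuousAt (Ici_mem_nhds ht))
  exact (hf.mono Ioi_subset_Ici_self).stronglyMeasurableAtFilter isOpen_Ioi t ht

lemma continuousOn_Ici_setIntegral_Ioi {f : ℝ → ℝ} {a : ℝ} (hf : IntegrableOn f (Ici a)) :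
    ContinuousOn (fun t => ∫ s in Ioi t, f s) (Ici a) := by
  have hint (b : ℝ) (hab : a ≤ b) : IntervalIntegrable f volume a b :=
    (intervalIntegrable_iff_integrableOn_Icc_of_le hab).2 (hf.mono_set Icc_subset_Ici_self)
  refine (continuousOn_const (c := ∫ s in Ioi a, f s).sub
    (continuousOn_Ici_intervalIntegral hint)).congr fun t ht => eq_sub_iff_add_eq'.2 ?_
  exact intervalIntegral.integral_interval_add_Ioi (hf.mono_set Ioi_subset_Ici_self)
    (hf.mono_set (Ioi_subset_Ici ht))

lemma setIntegral_Ioi_nonneg {f : ℝ → ℝ} {a t : ℝ} (hf : ∀ s, a ≤ s → 0 ≤ f s) (ht : a ≤ t) :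
    0 ≤ ∫ s in Ioi t, f s :=
  setIntegral_nonneg measurableSet_Ioi fun s hs => hf s (ht.trans (le_of_lt hs))

lemma antitoneOn_Ici_setIntegral_Ioi {f : ℝ → ℝ} {a : ℝ} (hfi : IntegrableOn f (Ici a))
    (hf : ∀ s, a ≤ s → 0 ≤ f s) : AntitoneOn (fun t => ∫ s in Ioi t, f s) (Ici a) := by
  intro t ht u _ htu
  refine setIntegral_mono_set (hfi.mono_set (Ioi_subset_Ici ht)) ?_
    (Ioi_subset_Ioi htu).eventuallyLE
  filter_upwards [ae_restrict_mem measurableSet_Ioi] with s hs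
  exact hf s (le_trans ht (le_of_lt hs))

/-- The properties shared by the primitives from `a` of nonnegative continuous functions, which
the nested integrals of the divergence condition inherit from one another. -/
structure IsCumulative (G : ℝ → ℝ) (a : ℝ) : Prop where
  continuousOn : ContinuousOn G (Ici a)
  monotoneOn : MonotoneOn G (Ici a)
  nonneg : ∀ t, a ≤ t → 0 ≤ G t

lemma isCumulative_intervalIntegral {f : ℝ → ℝ} {a : ℝ} (hf : ContinuousOn f (Ici a))
    (hf0 : ∀ t, a ≤ t → 0 ≤ f t) : IsCumulative (fun t => ∫ s in a..t, f s) a := by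
  have hint (b : ℝ) (hab : a ≤ b) : IntervalIntegrable f volume a b :=
    (hf.mono (by rw [uIcc_of_le hab]; exact Icc_subset_Ici_self)).intervalIntegrable
  refine ⟨continuousOn_Ici_intervalIntegral hint, fun t ht u hu htu => ?_,
    fun t ht => intervalIntegral.integral_nonneg ht fun s hs => hf0 s hs.1⟩
  refine intervalIntegral.integral_mono_interval le_rfl ht htu ?_ (hint u hu)
  filter_upwards [ae_restrict_mem measurableSet_Ioc] with s hs
  exact hf0 s hs.1.le

lemma tendsto_atTop_of_tendsto_integral_mul {w H : ℝ → ℝ} {a : ℝ}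
    (hwi : IntegrableOn w (Ici a)) (hw : ∀ t, a ≤ t → 0 ≤ w t)
    (hH : MonotoneOn H (Ici a)) (hH0 : 0 ≤ H a)
    (h : Tendsto (fun t => ∫ s in a..t, w s * H s) atTop atTop) : Tendsto H atTop atTop := by
  by_cases hbdd : ∃ M, ∀ t, a ≤ t → H t ≤ M
  · obtain ⟨M, hM⟩ := hbdd
    have hM0 : 0 ≤ M := hH0.trans (hM a le_rfl)
    have hle (t : ℝ) (hat : a ≤ t) : ∫ s in a..t, w s * H s ≤ ∫ s in Ici a, w s * M := by
      rw [intervalIntegral.integral_of_le hat]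
      have hsub : Ioc a t ⊆ Ici a := fun s hs => hs.1.le
      calc ∫ s in Ioc a t, w s * H s
          ≤ ∫ s in Ioc a t, w s * M := by
            refine integral_mono_of_nonneg ?_ ((hwi.mono_set hsub).mul_const M) ?_ <;>
              filter_upwards [ae_restrict_mem measurableSet_Ioc] with s hs
            · exact mul_nonneg (hw s hs.1.le)
                (hH0.trans (hH self_mem_Ici (hsub hs) hs.1.le))
            · exact mul_le_mul_of_nonneg_left (hM s hs.1.le) (hw s hs.1.le)
        _ ≤ ∫ s in Ici a, w s * M := by
            refine setIntegral_mono_set (hwi.mul_const M) ?_ hsub.eventuallyLE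
            filter_upwards [ae_restrict_mem measurableSet_Ici] with s hs
            exact mul_nonneg (hw s hs) hM0
    obtain ⟨t, hlt, hat⟩ := ((h.eventually_gt_atTop _).and (eventually_ge_atTop a)).exists
    exact absurd (hle t hat) hlt.not_ge
  · push Not at hbdd
    refine tendsto_atTop.2 fun M => ?_
    obtain ⟨t, hat, hMt⟩ := hbdd M
    filter_upwards [eventually_ge_atTop t] with s hs
    exact hMt.le.trans (hH hat (hat.trans hs) hs)

/-- `r` is an admissible coefficient on `[a, ∞)` for the exponent `p`: continuous, positive, and
noncanonical, i.e. `∫_a^∞ r^{-1/p} < ∞`. -/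
structure IsNoncanonical (r : ℝ → ℝ) (p a : ℝ) : Prop where
  continuousOn : ContinuousOn r (Ici a)
  pos : ∀ t, a ≤ t → 0 < r t
  integrableOn : IntegrableOn (fun s => r s ^ (-(1 / p))) (Ici a)

namespace IsNoncanonical

variable {r : ℝ → ℝ} {p a : ℝ}

lemma eventually_pos (hr : IsNoncanonical r p a) : ∀ᶠ t in atTop, 0 < r t :=
  (eventually_ge_atTop a).mono hr.pos

lemma rpow_nonneg (hr : IsNoncanonical r p a) (x t : ℝ) (ht : a ≤ t) : 0 ≤ r t ^ x :=
  Real.rpow_nonneg (hr.pos t ht).le x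

lemma continuousOn_rpow (hr : IsNoncanonical r p a) (x : ℝ) :
    ContinuousOn (fun t => r t ^ x) (Ici a) :=
  hr.continuousOn.rpow_const fun t ht => Or.inl (hr.pos t ht).ne'

end IsNoncanonical

section PiInf

variable {r₁ r₂ : ℝ → ℝ} {α β t₀ : ℝ}

lemma pi2_nonneg (h₂ : IsNoncanonical r₂ β t₀) {t : ℝ} (ht : t₀ ≤ t) : 0 ≤ pi2 r₂ β t :=
  setIntegral_Ioi_nonneg (h₂.rpow_nonneg _) ht

lemma piInf_integrand_nonneg (h₁ : IsNoncanonical r₁ α t₀) (h₂ : IsNoncanonical r₂ β t₀) (s : ℝ)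
    (hs : t₀ ≤ s) : 0 ≤ r₁ s ^ (-(1 / α)) * pi2 r₂ β s ^ (1 / α) :=
  mul_nonneg (h₁.rpow_nonneg _ s hs) (Real.rpow_nonneg (pi2_nonneg h₂ hs) _)

lemma integrableOn_piInf_integrand (hα : 0 < α) (h₁ : IsNoncanonical r₁ α t₀)
    (h₂ : IsNoncanonical r₂ β t₀) :
    IntegrableOn (fun s => r₁ s ^ (-(1 / α)) * pi2 r₂ β s ^ (1 / α)) (Ici t₀) := by
  have hanti : AntitoneOn (fun s => pi2 r₂ β s ^ (1 / α)) (Ici t₀) := fun s hs t ht hst =>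
    Real.rpow_le_rpow (pi2_nonneg h₂ ht)
      (antitoneOn_Ici_setIntegral_Ioi h₂.integrableOn (h₂.rpow_nonneg _) hs ht hst)
      (one_div_pos.2 hα).le
  refine h₁.integrableOn.mul_bdd (c := pi2 r₂ β t₀ ^ (1 / α))
    (aemeasurable_restrict_of_antitoneOn measurableSet_Ici hanti).aestronglyMeasurable ?_
  filter_upwards [ae_restrict_mem measurableSet_Ici] with s hs
  rw [Real.norm_of_nonneg (Real.rpow_nonneg (pi2_nonneg h₂ hs) _)]
  exact hanti self_mem_Ici hs hs

lemma continuousOn_piInf (hα : 0 < α) (h₁ : IsNoncanonical r₁ α t₀)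
    (h₂ : IsNoncanonical r₂ β t₀) : ContinuousOn (piInf r₁ r₂ α β) (Ici t₀) :=
  continuousOn_Ici_setIntegral_Ioi (integrableOn_piInf_integrand hα h₁ h₂)

lemma piInf_mem_Icc (hα : 0 < α) (h₁ : IsNoncanonical r₁ α t₀) (h₂ : IsNoncanonical r₂ β t₀)
    {t : ℝ} (ht : t₀ ≤ t) : piInf r₁ r₂ α β t ∈ Icc 0 (piInf r₁ r₂ α β t₀) :=
  ⟨setIntegral_Ioi_nonneg (piInf_integrand_nonneg h₁ h₂) ht,
    antitoneOn_Ici_setIntegral_Ioi (integrableOn_piInf_integrand hα h₁ h₂)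
      (piInf_integrand_nonneg h₁ h₂) self_mem_Ici ht ht⟩

end PiInf

/-- The right inverse of `L1 r p` on nonnegative continuous functions: the solution `y` of
`L1 r p y = G` with `y a = 0`. The triple integral of the divergence condition is a composition of
two such operators, applied to an ordinary primitive. -/
noncomputable def L1Inv (a : ℝ) (r : ℝ → ℝ) (p : ℝ) (G : ℝ → ℝ) : ℝ → ℝ :=
  fun t => ∫ s in a..t, r s ^ (-(1 / p)) * G s ^ (1 / p)

section L1Inv

variable {r G : ℝ → ℝ} {p a : ℝ}

lemma IsCumulative.continuousOn_L1Inv_integrand (hG : IsCumulative G a)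
    (hr : IsNoncanonical r p a) (hp : 0 < p) :
    ContinuousOn (fun s => r s ^ (-(1 / p)) * G s ^ (1 / p)) (Ici a) :=
  (hr.continuousOn_rpow _).mul
    (hG.continuousOn.rpow_const fun _ _ => Or.inr (one_div_pos.2 hp).le)

lemma isCumulative_L1Inv (hG : IsCumulative G a) (hr : IsNoncanonical r p a) (hp : 0 < p) :
    IsCumulative (L1Inv a r p G) a :=
  isCumulative_intervalIntegral (hG.continuousOn_L1Inv_integrand hr hp) fun t ht =>
    mul_nonneg (hr.rpow_nonneg _ t ht) (Real.rpow_nonneg (hG.nonneg t ht) _)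

lemma IsCumulative.hasDerivAt_L1Inv (hG : IsCumulative G a) (hr : IsNoncanonical r p a)
    (hp : 0 < p) {t : ℝ} (ht : a < t) :
    HasDerivAt (L1Inv a r p G) (r t ^ (-(1 / p)) * G t ^ (1 / p)) t :=
  hasDerivAt_intervalIntegral_of_continuousOn_Ici (hG.continuousOn_L1Inv_integrand hr hp) ht

lemma IsCumulative.tendsto_atTop_of_L1Inv (hG : IsCumulative G a) (hr : IsNoncanonical r p a)
    (hp : 0 < p) (h : Tendsto (L1Inv a r p G) atTop atTop) : Tendsto G atTop atTop := by
  have hpow : Tendsto (fun t => G t ^ (1 / p)) atTop atTop := by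
    refine tendsto_atTop_of_tendsto_integral_mul hr.integrableOn (hr.rpow_nonneg _)
      (fun s hs t ht hst => ?_) (Real.rpow_nonneg (hG.nonneg a le_rfl) _) h
    exact Real.rpow_le_rpow (hG.nonneg s hs) (hG.monotoneOn hs ht hst) (one_div_pos.2 hp).le
  refine ((tendsto_rpow_atTop hp).comp hpow).congr' ?_
  filter_upwards [eventually_ge_atTop a] with t ht
  rw [Function.comp_apply, one_div, Real.rpow_inv_rpow (hG.nonneg t ht) hp.ne']

end L1Inv

/-! ### Comparison with a divergent function -/

/-- `F ≲ -G` near infinity: `F` is eventually at most a fixed negative multiple of `G`. -/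
def DominatedByNeg (F G : ℝ → ℝ) : Prop :=
  ∃ c > 0, ∀ᶠ t in atTop, F t ≤ -(c * G t)

namespace DominatedByNeg

variable {F G : ℝ → ℝ}

lemma tendsto_atBot (h : DominatedByNeg F G) (hG : Tendsto G atTop atTop) :
    Tendsto F atTop atBot := by
  obtain ⟨c, hc, hFG⟩ := h
  exact tendsto_atBot_mono' _ hFG (tendsto_neg_atTop_atBot.comp (hG.const_mul_atTop hc))

lemma of_deriv {g : ℝ → ℝ} (h : DominatedByNeg (deriv F) g)
    (hF : ∀ᶠ t in atTop, DifferentiableAt ℝ F t) (hG : ∀ᶠ t in atTop, HasDerivAt G (g t) t)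
    (hG_top : Tendsto G atTop atTop) : DominatedByNeg F G := by
  obtain ⟨c, hc, hFG⟩ := h
  have hderiv : ∀ᶠ t in atTop,
      HasDerivAt (fun t => -(F t + c * G t)) (-(deriv F t + c * g t)) t := by
    filter_upwards [hF, hG] with t hFt hGt
    exact (hFt.hasDerivAt.add (hGt.const_mul c)).neg
  obtain ⟨a, hmono⟩ : ∃ a, MonotoneOn (fun t => -(F t + c * G t)) (Ici a) := by
    refine exists_monotoneOn_Ici_of_deriv_nonneg (hderiv.mono fun t ht => ht.differentiableAt) ?_
    filter_upwards [hderiv, hFG] with t ht hle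
    rw [ht.deriv]
    linarith
  refine ⟨c / 2, half_pos hc, ?_⟩
  filter_upwards [eventually_ge_atTop a,
    (hG_top.const_mul_atTop (half_pos hc)).eventually_ge_atTop (F a + c * G a)] with t hat hlarge
  have hle : F t + c * G t ≤ F a + c * G a := neg_le_neg_iff.1 (hmono self_mem_Ici hat hat)
  linarith

lemma deriv_of_L1 {r y : ℝ → ℝ} {p : ℝ} (hp : 0 < p) (hr : ∀ᶠ t in atTop, 0 < r t)
    (hG : ∀ᶠ t in atTop, 0 ≤ G t) (h : DominatedByNeg (L1 r p y) G) :
    DominatedByNeg (deriv y) fun t => r t ^ (-(1 / p)) * G t ^ (1 / p) := by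
  obtain ⟨c, hc, hyG⟩ := h
  refine ⟨c ^ (1 / p), Real.rpow_pos_of_pos hc _, ?_⟩
  filter_upwards [hr, hG, hyG] with t hrt hGt hle
  have hopow : opow (deriv y t) p ≤ -((r t)⁻¹ * (c * G t)) := by
    rw [← mul_neg, ← div_eq_inv_mul, le_div_iff₀' hrt]
    exact hle
  calc deriv y t ≤ -((r t)⁻¹ * (c * G t)) ^ (1 / p) :=
        le_neg_rpow_of_opow_le_neg hp (by positivity) hopow
    _ = -(c ^ (1 / p) * (r t ^ (-(1 / p)) * G t ^ (1 / p))) := by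
        rw [Real.mul_rpow (by positivity) (by positivity), Real.mul_rpow hc.le hGt,
          Real.inv_rpow hrt.le, ← Real.rpow_neg hrt.le, mul_left_comm]

lemma L1Inv_of_L1 {r y : ℝ → ℝ} {p a : ℝ} (hp : 0 < p) (hr : IsNoncanonical r p a)
    (hG : IsCumulative G a) (hy : ∀ᶠ t in atTop, DifferentiableAt ℝ y t)
    (hG_top : Tendsto (L1Inv a r p G) atTop atTop) (h : DominatedByNeg (L1 r p y) G) :
    DominatedByNeg y (L1Inv a r p G) :=
  (h.deriv_of_L1 hp hr.eventually_pos ((eventually_ge_atTop a).mono hG.nonneg)).of_deriv hy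
    ((eventually_gt_atTop a).mono fun _ ht => hG.hasDerivAt_L1Inv hr hp ht) hG_top

end DominatedByNeg

/-! ### Solutions -/

lemma L1_neg (r : ℝ → ℝ) (p : ℝ) (y : ℝ → ℝ) : L1 r p (-y) = -L1 r p y := by
  funext t
  simp [L1, deriv.neg, opow_neg]

lemma L2_neg (r₁ r₂ : ℝ → ℝ) (α β : ℝ) (y : ℝ → ℝ) : L2 r₁ r₂ α β (-y) = -L2 r₁ r₂ α β y := by
  funext t
  simp [L2, L1_neg, deriv.neg, opow_neg]

lemma L3_neg (r₁ r₂ : ℝ → ℝ) (α β : ℝ) (y : ℝ → ℝ) : L3 r₁ r₂ α β (-y) = -L3 r₁ r₂ α β y := by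
  funext t
  simp [L3, L2_neg, deriv.neg]

lemma eventually_differentiableAt_of_differentiableOn_Ici {f : ℝ → ℝ} {a : ℝ}
    (hf : DifferentiableOn ℝ f (Ici a)) : ∀ᶠ t in atTop, DifferentiableAt ℝ f t := by
  filter_upwards [eventually_gt_atTop a] with t ht
  exact hf.differentiableAt (Ici_mem_nhds ht)

lemma eventually_pos_or_neg_of_not_oscillatory {y : ℝ → ℝ} {a : ℝ} (hy : ContinuousOn y (Ici a))
    (hosc : ¬Oscillatory y) : (∀ᶠ t in atTop, 0 < y t) ∨ ∀ᶠ t in atTop, y t < 0 := by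
  obtain ⟨b, hab, hb⟩ : ∃ b, a ≤ b ∧ ∀ t, b ≤ t → y t ≠ 0 := by
    unfold Oscillatory at hosc
    push Not at hosc
    obtain ⟨b, hb⟩ := hosc
    exact ⟨max a b, le_max_left a b, fun t ht => hb t ((le_max_right a b).trans ht)⟩
  by_contra! h
  obtain ⟨s, hs, hbs⟩ := (h.1.and_eventually (eventually_ge_atTop b)).exists
  obtain ⟨t, ht, hbt⟩ := (h.2.and_eventually (eventually_ge_atTop b)).exists
  obtain ⟨x, hx, hx0⟩ := isPreconnected_Ici.intermediate_value (mem_Ici.2 hbs) (mem_Ici.2 hbt)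
    (hy.mono (Ici_subset_Ici.2 hab)) ⟨hs, ht⟩
  exact hb x hx hx0

namespace IsSolution

variable {t₀ α β γ : ℝ} {r₁ r₂ q σ y : ℝ → ℝ}

lemma neg (hy : IsSolution t₀ α β γ r₁ r₂ q σ y) : IsSolution t₀ α β γ r₁ r₂ q σ (-y) := by
  obtain ⟨T, hT, yc, yd, c1, d1, c2, d2, heq, hne⟩ := hy
  refine ⟨T, hT, yc.neg, yd.neg, ?_, ?_, ?_, ?_, fun t ht => ?_, by simpa using hne⟩
  · exact L1_neg r₁ α y ▸ c1.neg
  · exact L1_neg r₁ α y ▸ d1.neg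
  · exact L2_neg r₁ r₂ α β y ▸ c2.neg
  · exact L2_neg r₁ r₂ α β y ▸ d2.neg
  · simp only [L3_neg, Pi.neg_apply, opow_neg]
    linarith [heq t ht]

lemma eventually_differentiableAt (hy : IsSolution t₀ α β γ r₁ r₂ q σ y) :
    ∀ᶠ t in atTop, DifferentiableAt ℝ y t := by
  obtain ⟨T, -, -, yd, -⟩ := hy
  exact eventually_differentiableAt_of_differentiableOn_Ici yd

lemma eventually_differentiableAt_L1 (hy : IsSolution t₀ α β γ r₁ r₂ q σ y) :
    ∀ᶠ t in atTop, DifferentiableAt ℝ (L1 r₁ α y) t := by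
  obtain ⟨T, -, -, -, -, d1, -⟩ := hy
  exact eventually_differentiableAt_of_differentiableOn_Ici d1

lemma eventually_differentiableAt_L2 (hy : IsSolution t₀ α β γ r₁ r₂ q σ y) :
    ∀ᶠ t in atTop, DifferentiableAt ℝ (L2 r₁ r₂ α β y) t := by
  obtain ⟨T, -, -, -, -, -, -, d2, -⟩ := hy
  exact eventually_differentiableAt_of_differentiableOn_Ici d2

lemma eventually_L3_eq (hy : IsSolution t₀ α β γ r₁ r₂ q σ y) (hσ : Tendsto σ atTop atTop)
    (hpos : ∀ᶠ t in atTop, 0 < y t) :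
    ∀ᶠ t in atTop, L3 r₁ r₂ α β y t = -(q t * y (σ t) ^ γ) := by
  obtain ⟨T, -, -, -, -, -, -, -, heq, -⟩ := hy
  filter_upwards [eventually_ge_atTop T, hσ.eventually hpos] with t ht hpos_t
  rw [← opow_of_pos hpos_t]
  exact eq_neg_of_add_eq_zero_left (heq t ht)

lemma eventuallySigned_deriv (hy : IsSolution t₀ α β γ r₁ r₂ q σ y)
    (hr₁ : ∀ᶠ t in atTop, 0 < r₁ t) (hr₂ : ∀ᶠ t in atTop, 0 < r₂ t)
    (hq : ∀ᶠ t in atTop, 0 ≤ q t) (hσ : Tendsto σ atTop atTop)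
    (hpos : ∀ᶠ t in atTop, 0 < y t) : EventuallySigned (deriv y) := by
  have hL3 : EventuallySigned (deriv (L2 r₁ r₂ α β y)) := by
    right
    filter_upwards [hy.eventually_L3_eq hσ hpos, hq, hσ.eventually hpos] with t heq hqt hyt
    exact heq.trans_le (neg_nonpos.2 (mul_nonneg hqt (Real.rpow_nonneg hyt.le γ)))
  -- `L2 r₁ r₂ α β y` unfolds to `L1 r₂ β (L1 r₁ α y)`, so facts about `L1` serve both levels.
  have hL2 : EventuallySigned (L1 r₂ β (L1 r₁ α y)) :=
    hL3.of_deriv hy.eventually_differentiableAt_L2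
  have hL1 : EventuallySigned (L1 r₁ α y) :=
    (hL2.deriv_of_L1 hr₂).of_deriv hy.eventually_differentiableAt_L1
  exact hL1.deriv_of_L1 hr₁

lemma dominatedByNeg_L3 (hy : IsSolution t₀ α β γ r₁ r₂ q σ y) (hγ : 0 ≤ γ)
    (hq : ∀ᶠ t in atTop, 0 ≤ q t) (hσ : Tendsto σ atTop atTop) {l : ℝ} (hl : 0 < l)
    (hly : ∀ᶠ t in atTop, l ≤ y t) {f : ℝ → ℝ} {B : ℝ} (hf : ∀ᶠ t in atTop, f t ∈ Icc 0 B) :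
    DominatedByNeg (L3 r₁ r₂ α β y) fun t => f t ^ γ * q t := by
  have hB : 0 ≤ B := by
    obtain ⟨t, ht⟩ := hf.exists
    exact ht.1.trans ht.2
  have hc : 0 < l ^ γ / (B ^ γ + 1) := by positivity
  refine ⟨_, hc, ?_⟩
  filter_upwards [hy.eventually_L3_eq hσ (hly.mono fun t => hl.trans_le), hq, hσ.eventually hly,
    hf] with t heq hqt hlyt hft
  have hfB : f t ^ γ ≤ B ^ γ + 1 :=
    (Real.rpow_le_rpow hft.1 hft.2 hγ).trans (lt_add_one _).le
  rw [heq, neg_le_neg_iff]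
  calc l ^ γ / (B ^ γ + 1) * (f t ^ γ * q t)
      ≤ l ^ γ / (B ^ γ + 1) * ((B ^ γ + 1) * q t) := by gcongr
    _ = q t * l ^ γ := by field_simp
    _ ≤ q t * y (σ t) ^ γ := by gcongr

lemma tendsto_atBot_of_eventually_ge (hy : IsSolution t₀ α β γ r₁ r₂ q σ y)
    (hα : 0 < α) (hβ : 0 < β) (hγ : 0 ≤ γ)
    (h₁ : IsNoncanonical r₁ α t₀) (h₂ : IsNoncanonical r₂ β t₀)
    (hqc : ContinuousOn q (Ici t₀)) (hq0 : ∀ t, t₀ ≤ t → 0 ≤ q t)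
    (hσc : ContinuousOn σ (Ici t₀)) (hσm : MapsTo σ (Ici t₀) (Ici t₀))
    (hσ : Tendsto σ atTop atTop)
    (hdiv : Tendsto (L1Inv t₀ r₁ α (L1Inv t₀ r₂ β
      fun u => ∫ s in t₀..u, piInf r₁ r₂ α β (σ s) ^ γ * q s)) atTop atTop)
    {l : ℝ} (hl : 0 < l) (hly : ∀ᶠ t in atTop, l ≤ y t) : Tendsto y atTop atBot := by
  have hπ (t : ℝ) (ht : t₀ ≤ t) := piInf_mem_Icc hα h₁ h₂ (hσm ht)
  have hgc : ContinuousOn (fun s => piInf r₁ r₂ α β (σ s) ^ γ * q s) (Ici t₀) :=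
    (((continuousOn_piInf hα h₁ h₂).comp hσc hσm).rpow_const fun _ _ => Or.inr hγ).mul hqc
  set I : ℝ → ℝ := fun u => ∫ s in t₀..u, piInf r₁ r₂ α β (σ s) ^ γ * q s
  have hI : IsCumulative I t₀ := isCumulative_intervalIntegral hgc fun t ht =>
    mul_nonneg (Real.rpow_nonneg (hπ t ht).1 γ) (hq0 t ht)
  have hJ : IsCumulative (L1Inv t₀ r₂ β I) t₀ := isCumulative_L1Inv hI h₂ hβ
  have hJ_top : Tendsto (L1Inv t₀ r₂ β I) atTop atTop := hJ.tendsto_atTop_of_L1Inv h₁ hα hdiv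
  have hI_top : Tendsto I atTop atTop := hI.tendsto_atTop_of_L1Inv h₂ hβ hJ_top
  have hL3 : DominatedByNeg (L3 r₁ r₂ α β y) fun t => piInf r₁ r₂ α β (σ t) ^ γ * q t :=
    hy.dominatedByNeg_L3 hγ ((eventually_ge_atTop t₀).mono hq0) hσ hl hly
      ((eventually_ge_atTop t₀).mono hπ)
  have hL2 : DominatedByNeg (L1 r₂ β (L1 r₁ α y)) I :=
    DominatedByNeg.of_deriv hL3 hy.eventually_differentiableAt_L2
      ((eventually_gt_atTop t₀).mono fun t ht =>
        hasDerivAt_intervalIntegral_of_continuousOn_Ici hgc ht) hI_top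
  have hL1 : DominatedByNeg (L1 r₁ α y) (L1Inv t₀ r₂ β I) :=
    hL2.L1Inv_of_L1 hβ h₂ hI hy.eventually_differentiableAt_L1 hJ_top
  exact (hL1.L1Inv_of_L1 hα h₁ hJ hy.eventually_differentiableAt hdiv).tendsto_atBot hdiv

end IsSolution

theorem propertyA_of_div'_general {t₀ α β γ : ℝ} {r₁ r₂ q σ : ℝ → ℝ}
    (hα : 0 < α) (hβ : 0 < β) (hγ : 0 ≤ γ)
    (h₁ : IsNoncanonical r₁ α t₀) (h₂ : IsNoncanonical r₂ β t₀)
    (hqc : ContinuousOn q (Ici t₀)) (hq0 : ∀ t, t₀ ≤ t → 0 ≤ q t)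
    (hσc : ContinuousOn σ (Ici t₀)) (hσm : MapsTo σ (Ici t₀) (Ici t₀))
    (hσ : Tendsto σ atTop atTop)
    (hdiv : Tendsto (fun t => ∫ v in t₀..t, r₁ v ^ (-(1 / α)) *
      (∫ u in t₀..v, r₂ u ^ (-(1 / β)) *
        (∫ s in t₀..u, piInf r₁ r₂ α β (σ s) ^ γ * q s) ^ (1 / β)) ^ (1 / α)) atTop atTop) :
    PropertyA t₀ α β γ r₁ r₂ q σ := by
  have tendsto_zero {y : ℝ → ℝ} (hy : IsSolution t₀ α β γ r₁ r₂ q σ y)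
      (hpos : ∀ᶠ t in atTop, 0 < y t) : Tendsto y atTop (nhds 0) := by
    have hsigned : EventuallySigned (deriv y) := hy.eventuallySigned_deriv h₁.eventually_pos
      h₂.eventually_pos ((eventually_ge_atTop t₀).mono hq0) hσ hpos
    refine (tendsto_zero_or_eventually_ge_of_deriv_eventuallySigned
      hy.eventually_differentiableAt hpos hsigned).resolve_right ?_
    rintro ⟨l, hl, hly⟩
    have hbot : Tendsto y atTop atBot :=
      hy.tendsto_atBot_of_eventually_ge hα hβ hγ h₁ h₂ hqc hq0 hσc hσm hσ hdiv hl hly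
    obtain ⟨t, hyt, hyt'⟩ := (hpos.and (hbot.eventually_lt_atBot 0)).exists
    exact hyt.not_gt hyt'
  refine fun y hy => or_iff_not_imp_left.2 fun hosc => ?_
  obtain ⟨T, -, yc, -⟩ := id hy
  rcases eventually_pos_or_neg_of_not_oscillatory yc hosc with hpos | hneg
  · exact tendsto_zero hy hpos
  · simpa using (tendsto_zero hy.neg (hneg.mono fun t ht => neg_pos.2 ht)).neg

namespace Hyp

variable {t₀ α β γ : ℝ} {r₁ r₂ q σ : ℝ → ℝ}

lemma isNoncanonical_r₁ (H : Hyp t₀ α β γ r₁ r₂ q σ) : IsNoncanonical r₁ α t₀ :=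
  ⟨H.hr₁c, H.hr₁p, H.hπ₁fin⟩

lemma isNoncanonical_r₂ (H : Hyp t₀ α β γ r₁ r₂ q σ) : IsNoncanonical r₂ β t₀ :=
  ⟨H.hr₂c, H.hr₂p, H.hπ₂fin⟩

lemma mapsTo_σ (H : Hyp t₀ α β γ r₁ r₂ q σ) : MapsTo σ (Ici t₀) (Ici t₀) :=
  fun t ht => le_trans ht (H.hσadv t ht)

lemma tendsto_σ (H : Hyp t₀ α β γ r₁ r₂ q σ) : Tendsto σ atTop atTop :=
  tendsto_atTop_mono' _ ((eventually_ge_atTop t₀).mono H.hσadv) tendsto_id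

end Hyp

theorem propertyA_of_div' (t₀ α β γ : ℝ) (r₁ r₂ q σ : ℝ → ℝ)
    (H : Hyp t₀ α β γ r₁ r₂ q σ)
    (hdiv : Filter.Tendsto (fun t => ∫ v in t₀..t, r₁ v ^ (-(1/α)) *
      (∫ u in t₀..v, r₂ u ^ (-(1/β)) *
        (∫ s in t₀..u, (piInf r₁ r₂ α β (σ s)) ^ γ * q s) ^ (1/β)) ^ (1/α))
      Filter.atTop Filter.atTop) :
    PropertyA t₀ α β γ r₁ r₂ q σ := by
  exact propertyA_of_div'_general H.hα.pos H.hβ.pos H.hγ.pos.le H.isNoncanonical_r₁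
    H.isNoncanonical_r₂ H.hqc H.hq0 H.hσd.continuousOn H.mapsTo_σ H.tendsto_σ hdiv
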